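/- Let (S, 𝒮) and (S', 𝒮') be measurable spaces such that 𝒮' contains all singleton sets, and let φ : S → S' be measurable. Let Π be a Markov kernel from S to S, Q a Markov kernel from S' to S', and K a Markov kernel from S' to S, satisfying (i) K(y; φ^{-1}{y}) = 1 for every y ∈ S', and (ii) the intertwining K Π = Q K, where (K Π)(y; A) := ∫_S K(y; dz) Π(z; A) and (Q K)(y; A) := ∫_{S'} Q(y; dz') K(z'; A). Then for every probability measure η on S', every n ≥ 0, all bounded measurable g₀, …, g_n : S' → ℝ and f : S → ℝ: ∫_{S'} η(dy) ∫_S K(y; dx₀) g₀(φ(x₀)) ∫_S Π(x₀; dx₁) g₁(φ(x₁)) ⋯ ∫_S Π(x_{n−1}; dx_n) g_n(φ(x_n)) f(x_n) = ∫_{S'} η(dy₀) g₀(y₀) ∫_{S'} Q(y₀; dy₁) g₁(y₁) ⋯ ∫_{S'} Q(y_{n−1}; dy_n) g_n(y_n) ∫_S K(y_n; dx) f(x). (Equivalently: if X = (X(n), n ≥ 0) is a time-homogeneous Markov chain on S with transition kernel Π and initial distribution η K, then Y(n) := φ(X(n)) is a time-homogeneous Markov chain with initial distribution η and transition kernel Q,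 and E[f(X(n)) | Y(0), …, Y(n)] = (K f)(Y(n)) a.s.) -/

import Mathlib

/-!
Since `K y` is carried by the fibre `φ ⁻¹' {y}`, a factor `g (φ x)` leaves the integral against
`K y` as the constant `g y`; the intertwining then moves `K` past one transition, turning `Π` into
`Q`. By induction on the number of steps, `K` travels to the far end of the iterated integral, so
the identity already holds for each starting point `y`, before averaging against `η`.
-/

open MeasureTheory ProbabilityTheory

noncomputable section

/-- Iterated integral `x ↦ g₀(φ x) ∫ Π(x;dx₁) g₁(φ x₁) ⋯ ∫ Π(x_{m−1};dx_m) g_m(φ x_m) f(x_m)`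
(with `m+1` test functions `g`). -/
def lhsAux {S S' : Type*} [MeasurableSpace S] (φ : S → S') (Pi : Kernel S S) (f : S → ℝ) :
    (m : ℕ) → (Fin (m + 1) → S' → ℝ) → S → ℝ
  | 0, g, x => g 0 (φ x) * f x
  | m + 1, g, x => g 0 (φ x) * ∫ y, lhsAux φ Pi f m (Fin.tail g) y ∂(Pi x)

/-- Iterated integral `y ↦ g₀(y) ∫ Q(y;dy₁) g₁(y₁) ⋯ ∫ Q(y_{m−1};dy_m) g_m(y_m) ∫ K(y_m;dx) f(x)`
(with `m+1` test functions `g`). -/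
def rhsAux {S S' : Type*} [MeasurableSpace S] [MeasurableSpace S']
    (Q : Kernel S' S') (K : Kernel S' S) (f : S → ℝ) :
    (m : ℕ) → (Fin (m + 1) → S' → ℝ) → S' → ℝ
  | 0, g, y => g 0 y * ∫ x, f x ∂(K y)
  | m + 1, g, y => g 0 y * ∫ z, rhsAux Q K f m (Fin.tail g) z ∂(Q y)

end

section Integration

variable {α β γ E : Type*} [MeasurableSpace α] [MeasurableSpace β] [MeasurableSpace γ]
  [NormedAddCommGroup E] [NormedSpace ℝ E]

theorem exists_norm_mul_le {ι R : Type*} [NonUnitalSeminormedRing R] {u v : ι → R}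
    (hu : ∃ C, ∀ i, ‖u i‖ ≤ C) (hv : ∃ C, ∀ i, ‖v i‖ ≤ C) : ∃ C, ∀ i, ‖u i * v i‖ ≤ C := by
  obtain ⟨C, hC⟩ := hu
  obtain ⟨D, hD⟩ := hv
  exact ⟨C * D, fun i => norm_mul_le_of_le (hC i) (hD i)⟩

theorem exists_norm_integral_kernel_le (κ : Kernel α β) [IsFiniteKernel κ] {f : β → E}
    (hf : ∃ C, ∀ b, ‖f b‖ ≤ C) : ∃ C, ∀ a, ‖∫ b, f b ∂(κ a)‖ ≤ C := by
  obtain ⟨C, hC⟩ := hf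
  refine ⟨|C| * κ.bound.toReal, fun a => ?_⟩
  have mass_le : (κ a).real Set.univ ≤ κ.bound.toReal :=
    ENNReal.toReal_mono κ.bound_ne_top (κ.measure_le_bound a Set.univ)
  calc ‖∫ b, f b ∂(κ a)‖
      ≤ |C| * (κ a).real Set.univ :=
        norm_integral_le_of_norm_le_const (.of_forall fun b => (hC b).trans (le_abs_self C))
    _ ≤ |C| * κ.bound.toReal := by gcongr

theorem integral_comp_smul_of_ae_eq_const {δ 𝕜 : Type*} [NormedDivisionRing 𝕜] [Module 𝕜 E]
    [NormSMulClass 𝕜 E] [SMulCommClass ℝ 𝕜 E] {μ : Measure α} {φ : α → δ} {y : δ}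
    (hφ : ∀ᵐ x ∂μ, φ x = y) (g : δ → 𝕜) (h : α → E) :
    ∫ x, g (φ x) • h x ∂μ = g y • ∫ x, h x ∂μ :=
  calc ∫ x, g (φ x) • h x ∂μ
      = ∫ x, g y • h x ∂μ := integral_congr_ae (hφ.mono fun x hx => by simp only [hx])
    _ = g y • ∫ x, h x ∂μ := integral_smul (g y) h

theorem integral_integral_eq_of_kernel_comp_eq {δ : Type*} [MeasurableSpace δ]
    {κ : Kernel α β} {η : Kernel β δ} {κ' : Kernel α γ} {η' : Kernel γ δ}
    (hcomp : η ∘ₖ κ = η' ∘ₖ κ') {a : α} {f : δ → E} (hf : Integrable f ((η ∘ₖ κ) a)) :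
    ∫ b, ∫ d, f d ∂(η b) ∂(κ a) = ∫ c, ∫ d, f d ∂(η' c) ∂(κ' a) := by
  rw [← Kernel.integral_comp hf, hcomp, Kernel.integral_comp (hcomp ▸ hf)]

end Integration

section MarkovFunctions

variable {S S' : Type*} [MeasurableSpace S] {φ : S → S'} {f : S → ℝ}

theorem exists_abs_lhsAux_le (φ : S → S') (Pi : Kernel S S) [IsFiniteKernel Pi]
    (hfb : ∃ C, ∀ x, |f x| ≤ C) (m : ℕ) (g : Fin (m + 1) → S' → ℝ)
    (hgb : ∀ i, ∃ C, ∀ y, |g i y| ≤ C) : ∃ C, ∀ x, |lhsAux φ Pi f m g x| ≤ C := by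
  have comp_bdd {v : S' → ℝ} : (∃ C, ∀ y, |v y| ≤ C) → ∃ C, ∀ x, |v (φ x)| ≤ C :=
    fun ⟨C, hC⟩ => ⟨C, fun x => hC (φ x)⟩
  induction m with
  | zero => exact exists_norm_mul_le (R := ℝ) (comp_bdd (hgb 0)) hfb
  | succ m ih =>
    have tail_bdd := ih (Fin.tail g) fun i => hgb i.succ
    exact exists_norm_mul_le (R := ℝ) (comp_bdd (hgb 0))
      (exists_norm_integral_kernel_le Pi tail_bdd)

variable [MeasurableSpace S']

theorem measurable_lhsAux (hφ : Measurable φ) (Pi : Kernel S S) (hf : Measurable f) (m : ℕ)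
    (g : Fin (m + 1) → S' → ℝ) (hg : ∀ i, Measurable (g i)) :
    Measurable (lhsAux φ Pi f m g) := by
  induction m with
  | zero => exact ((hg 0).comp hφ).mul hf
  | succ m ih =>
    have tail_meas := ih (Fin.tail g) fun i => hg i.succ
    exact ((hg 0).comp hφ).mul tail_meas.stronglyMeasurable.integral_kernel.measurable

theorem integrable_lhsAux (hφ : Measurable φ) (Pi : Kernel S S) [IsFiniteKernel Pi]
    (hf : Measurable f) (hfb : ∃ C, ∀ x, |f x| ≤ C) (m : ℕ) (g : Fin (m + 1) → S' → ℝ)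
    (hg : ∀ i, Measurable (g i)) (hgb : ∀ i, ∃ C, ∀ y, |g i y| ≤ C)
    (μ : Measure S) [IsFiniteMeasure μ] : Integrable (lhsAux φ Pi f m g) μ := by
  obtain ⟨C, hC⟩ := exists_abs_lhsAux_le φ Pi hfb m g hgb
  exact .of_bound (measurable_lhsAux hφ Pi hf m g hg).aestronglyMeasurable C (.of_forall hC)

theorem markov_functions_general (hφ : Measurable φ) (Pi : Kernel S S) [IsFiniteKernel Pi]
    (Q : Kernel S' S') (K : Kernel S' S) [IsFiniteKernel K]
    (hK : ∀ y, ∀ᵐ x ∂(K y), φ x = y) (hint : Pi ∘ₖ K = K ∘ₖ Q)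
    (hf : Measurable f) (hfb : ∃ C, ∀ x, |f x| ≤ C) (m : ℕ) (g : Fin (m + 1) → S' → ℝ)
    (hg : ∀ i, Measurable (g i)) (hgb : ∀ i, ∃ C, ∀ y, |g i y| ≤ C) (y : S') :
    ∫ x, lhsAux φ Pi f m g x ∂(K y) = rhsAux Q K f m g y := by
  induction m generalizing y with
  | zero => exact integral_comp_smul_of_ae_eq_const (hK y) (g 0) f
  | succ m ih =>
    have tail_meas : ∀ i, Measurable (Fin.tail g i) := fun i => hg i.succ
    have tail_bdd : ∀ i, ∃ C, ∀ y, |Fin.tail g i y| ≤ C := fun i => hgb i.succ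
    have tail_int : Integrable (lhsAux φ Pi f m (Fin.tail g)) ((Pi ∘ₖ K) y) :=
      integrable_lhsAux hφ Pi hf hfb m _ tail_meas tail_bdd _
    calc ∫ x, g 0 (φ x) * ∫ x', lhsAux φ Pi f m (Fin.tail g) x' ∂(Pi x) ∂(K y)
        = g 0 y * ∫ x, ∫ x', lhsAux φ Pi f m (Fin.tail g) x' ∂(Pi x) ∂(K y) :=
          integral_comp_smul_of_ae_eq_const (hK y) (g 0) _
      _ = g 0 y * ∫ z, ∫ x, lhsAux φ Pi f m (Fin.tail g) x ∂(K z) ∂(Q y) := by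
          rw [integral_integral_eq_of_kernel_comp_eq hint tail_int]
      _ = g 0 y * ∫ z, rhsAux Q K f m (Fin.tail g) z ∂(Q y) := by
          simp only [ih (Fin.tail g) tail_meas tail_bdd]

end MarkovFunctions

/-- (Markov functions theorem, finite-dimensional-distribution form:
under `K(y; φ⁻¹{y}) = 1` and the intertwining `K Π = Q K`, the laws of the `Π`-chain started
from `η K`, tested against functions of `φ` and a final `f`, match the corresponding iterated
`Q`/`K` integrals). -/
theorem markov_functions
    {S S' : Type*} [MeasurableSpace S] [MeasurableSpace S'] [MeasurableSingletonClass S']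
    (φ : S → S') (hφ : Measurable φ)
    (Pi : Kernel S S) [IsMarkovKernel Pi]
    (Q : Kernel S' S') [IsMarkovKernel Q]
    (K : Kernel S' S) [IsMarkovKernel K]
    (hK : ∀ y : S', K y (φ ⁻¹' {y}) = 1)
    (hint : Pi ∘ₖ K = K ∘ₖ Q) :
    ∀ (η : Measure S'), IsProbabilityMeasure η →
    ∀ (m : ℕ) (g : Fin (m + 1) → S' → ℝ),
      (∀ i, Measurable (g i)) → (∀ i, ∃ C, ∀ y, |g i y| ≤ C) →
      ∀ f : S → ℝ, Measurable f → (∃ C, ∀ x, |f x| ≤ C) →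
      ∫ y, (∫ x, lhsAux φ Pi f m g x ∂(K y)) ∂η = ∫ y, rhsAux Q K f m g y ∂η := by
  intro η _ m g hg hgb f hf hfb
  have hK_ae (y : S') : ∀ᵐ x ∂(K y), φ x = y :=
    (mem_ae_iff_prob_eq_one (hφ (measurableSet_singleton y))).2 (hK y)
  simp only [markov_functions_general hφ Pi Q K hK_ae hint hf hfb m g hg hgb]
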